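/- Let Θ be a set of time-inhomogeneous tabular environments on common state space S, action space A and horizon H with fixed initial state s₁ and a choice E ↦ π*_E of optimal policies. For each h let L_h^P(δ) and L_h^R(δ) denote the minimal cardinalities of δ-covers of the families {P_h^{E} : E ∈ Θ} and {r_h^{E} : E ∈ Θ} in the metrics l1(P,P') = max_{(s,a)} Σ_{s'} |P(s'|s,a) − P'(s'|s,a)| and max_{(s,a)}|r(s,a) − r'(s,a)| respectively, and assume these are finite for every δ > 0. Let K_surr(ε) be the minimal number of classes of a layered ε-value partition of Θ. Define the dimensions d_{l1,h}^P = limsup_{δ→0⁺} log L_h^P(δ) / log(1/δ), d_{l1,h}^R = limsup_{δ→0⁺} log L_h^R(δ) / log(1/δ), d_{l1} = Σ_{h=1}^{H} ( d_{l1,h}^P + d_{l1,h}^R ), and d_surr = limsup_{ε→0⁺} log K_surr(ε) / log(1/ε). Then d_surr ≤ d_{l1}. -/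

import Mathlib

open Finset Filter

/-- A tabular environment: a pair of (time-indexed) transition kernels and rewards. -/
abbrev Env (S A : Type*) := (ℕ → S → A → S → ℝ) × (ℕ → S → A → ℝ)

variable {S A : Type*}

/-- Value function: `val H P r pol k s` is the value at the layer with `k` steps
remaining (i.e. at layer `H + 1 - k`); thus `val H P r pol H s₁` is `V_{1,π}(s₁)`. -/
noncomputable def val [Fintype S] [Fintype A] (H : ℕ) (P : ℕ → S → A → S → ℝ)
    (r : ℕ → S → A → ℝ) (pol : ℕ → S → A → ℝ) : ℕ → S → ℝ
  | 0 => fun _ => 0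
  | (k + 1) => fun s => ∑ a, pol (H - k) s a *
      (r (H - k) s a + ∑ s', P (H - k) s a s' * val H P r pol k s')

/-- Each `P h (· | s,a)`, `h = 1,…,H`, is a probability distribution on `S`. -/
def IsKernel [Fintype S] [Fintype A] (H : ℕ) (P : ℕ → S → A → S → ℝ) : Prop :=
  ∀ h ∈ Finset.Icc 1 H, ∀ s a, (∀ s', 0 ≤ P h s a s') ∧ ∑ s', P h s a s' = 1

/-- Each mean reward `r h s a`, `h = 1,…,H`, lies in `[0,1]`. -/
def IsReward (H : ℕ) (r : ℕ → S → A → ℝ) : Prop :=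
  ∀ h ∈ Finset.Icc 1 H, ∀ (s : S) (a : A), 0 ≤ r h s a ∧ r h s a ≤ 1

/-- Each `pol h (· | s)`, `h = 1,…,H`, is a probability distribution on `A`. -/
def IsPolicy [Fintype A] (H : ℕ) (pol : ℕ → S → A → ℝ) : Prop :=
  ∀ h ∈ Finset.Icc 1 H, ∀ s : S, (∀ a, 0 ≤ pol h s a) ∧ ∑ a, pol h s a = 1

/-- A layered ε-value partition of `Θ` into `K` classes: a genuine partition whose
classes have layerwise product form, and on each class the value of `π*_E` changes by
at most `ε` when the environment is replaced by another member of the class. -/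
def IsLayeredValuePartition [Fintype S] [Fintype A]
    (H : ℕ) (s₁ : S) (Θ : Set (Env S A)) (πstar : Env S A → (ℕ → S → A → ℝ))
    (ε : ℝ) (K : ℕ) (T : Fin K → Set (Env S A)) : Prop :=
  (∀ E ∈ Θ, ∃! k, E ∈ T k) ∧
  (∀ k, ∃ (As : ℕ → Set (S → A → S → ℝ)) (Bs : ℕ → Set (S → A → ℝ)),
    T k = {E ∈ Θ | ∀ h ∈ Finset.Icc 1 H, E.1 h ∈ As h ∧ E.2 h ∈ Bs h}) ∧
  (∀ k, ∀ E ∈ T k, ∀ E' ∈ T k,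
    val H E.1 E.2 (πstar E) H s₁ - val H E'.1 E'.2 (πstar E) H s₁ ≤ ε)

/-!
By the simulation lemma, replacing kernels at `l1`-distance at most `η` and rewards at distance at
most `ρ` moves the value of any fixed policy by at most `H ρ + (H choose 2) η`. Labelling each
layer's kernel and reward by a centre of a `δ`-cover therefore yields a layered partition into
`∏ h, L_h^P(δ) L_h^R(δ)` classes, on each of which values vary by at most `H (H + 1) δ`. With `δ` a
constant multiple of `ε`, taking logarithms turns the product into a sum, and the constant is
invisible to the dimension because `log (1 / (c ε)) / log (1 / ε) → 1`.
-/

section UpperBoxDim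

open scoped Topology

/-- The upper box dimension `limsup_{δ → 0⁺} log N(δ) / log (1 / δ)` attached to a counting function
`N` of the scale. A count `N δ = 0` contributes `Real.log 0 = 0`, the same as `N δ = 1`. -/
noncomputable def upperBoxDim (N : ℝ → ℕ) : EReal :=
  limsup (fun δ : ℝ => ((Real.log (N δ) / Real.log (1 / δ) : ℝ) : EReal)) (𝓝[>] 0)

lemma tendsto_log_one_div_nhdsGT_zero :
    Tendsto (fun δ : ℝ => Real.log (1 / δ)) (𝓝[>] 0) atTop := by
  simp only [one_div]
  exact Real.tendsto_log_atTop.comp tendsto_inv_nhdsGT_zero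

lemma eventually_log_one_div_pos : ∀ᶠ δ : ℝ in 𝓝[>] 0, 0 < Real.log (1 / δ) :=
  tendsto_log_one_div_nhdsGT_zero.eventually_gt_atTop 0

lemma eventually_log_natCast_div_log_nonneg (N : ℝ → ℕ) :
    ∀ᶠ δ : ℝ in 𝓝[>] 0, (0 : EReal) ≤ ((Real.log (N δ) / Real.log (1 / δ) : ℝ) : EReal) := by
  filter_upwards [eventually_log_one_div_pos] with δ hδ
  exact_mod_cast div_nonneg (Real.log_natCast_nonneg _) hδ.le

lemma upperBoxDim_nonneg (N : ℝ → ℕ) : 0 ≤ upperBoxDim N :=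
  le_limsup_of_frequently_le (eventually_log_natCast_div_log_nonneg N).frequently

lemma log_natCast_le_log_natCast {m n : ℕ} (h : m ≤ n) : Real.log m ≤ Real.log n := by
  rcases m.eq_zero_or_pos with rfl | hm
  · simpa using Real.log_natCast_nonneg n
  · exact Real.log_le_log (by exact_mod_cast hm) (by exact_mod_cast h)

lemma log_natCast_mul_le (m n : ℕ) :
    Real.log ((m * n : ℕ) : ℝ) ≤ Real.log m + Real.log n := by
  rcases eq_or_ne m 0 with rfl | hm
  · simpa using Real.log_natCast_nonneg n
  rcases eq_or_ne n 0 with rfl | hn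
  · simpa using Real.log_natCast_nonneg m
  rw [Nat.cast_mul, Real.log_mul (Nat.cast_ne_zero.2 hm) (Nat.cast_ne_zero.2 hn)]

lemma upperBoxDim_mono {M N : ℝ → ℕ} (h : ∀ᶠ δ in 𝓝[>] 0, M δ ≤ N δ) :
    upperBoxDim M ≤ upperBoxDim N := by
  refine limsup_le_limsup ?_
  filter_upwards [h, eventually_log_one_div_pos] with δ hMN hδ
  exact_mod_cast div_le_div_of_nonneg_right (log_natCast_le_log_natCast hMN) hδ.le

lemma upperBoxDim_mul_le (M N : ℝ → ℕ) :
    upperBoxDim (fun δ => M δ * N δ) ≤ upperBoxDim M + upperBoxDim N := by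
  have ne_bot (L : ℝ → ℕ) : upperBoxDim L ≠ ⊥ :=
    (EReal.bot_lt_zero.trans_le (upperBoxDim_nonneg L)).ne'
  refine le_trans (limsup_le_limsup ?_)
    (EReal.limsup_add_le (.inl (ne_bot M)) (.inr (ne_bot N)))
  filter_upwards [eventually_log_one_div_pos] with δ hδ
  rw [Pi.add_apply, ← EReal.coe_add, ← add_div]
  exact_mod_cast div_le_div_of_nonneg_right (log_natCast_mul_le _ _) hδ.le

lemma upperBoxDim_prod_le {ι : Type*} (s : Finset ι) (N : ι → ℝ → ℕ) :
    upperBoxDim (fun δ => ∏ i ∈ s, N i δ) ≤ ∑ i ∈ s, upperBoxDim (N i) := by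
  classical
  induction s using Finset.induction_on with
  | empty => simp [upperBoxDim]
  | insert i s hi ih =>
    simp only [Finset.prod_insert hi, Finset.sum_insert hi]
    exact (upperBoxDim_mul_le _ _).trans (by gcongr)

lemma tendsto_log_one_div_const_mul_div_log {c : ℝ} (hc : 0 < c) :
    Tendsto (fun ε : ℝ => Real.log (1 / (c * ε)) / Real.log (1 / ε)) (𝓝[>] 0) (𝓝 1) := by
  have h : Tendsto (fun ε : ℝ => 1 + -Real.log c / Real.log (1 / ε)) (𝓝[>] 0) (𝓝 (1 + 0)) :=
    tendsto_const_nhds.add (tendsto_log_one_div_nhdsGT_zero.const_div_atTop _)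
  rw [add_zero] at h
  refine h.congr' ?_
  filter_upwards [eventually_log_one_div_pos, self_mem_nhdsWithin] with ε hlog (hε : 0 < ε)
  rw [one_add_div hlog.ne', one_div (c * ε), mul_inv, ← one_div ε,
    Real.log_mul (inv_ne_zero hc.ne') (one_div_ne_zero hε.ne'), Real.log_inv, add_comm]

lemma upperBoxDim_comp_const_mul_le (N : ℝ → ℕ) {c : ℝ} (hc : 0 < c) :
    upperBoxDim (fun ε => N (c * ε)) ≤ upperBoxDim N := by
  have hscale : Tendsto (fun ε : ℝ => c * ε) (𝓝[>] 0) (𝓝[>] 0) := by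
    simpa using TendstoNhdsWithinIoi.const_mul hc (tendsto_id (x := 𝓝[>] (0 : ℝ)))
  set u : ℝ → EReal := fun δ => ((Real.log (N δ) / Real.log (1 / δ) : ℝ) : EReal)
  set v : ℝ → EReal := fun ε => ((Real.log (1 / (c * ε)) / Real.log (1 / ε) : ℝ) : EReal)
  have hv : limsup v (𝓝[>] 0) = 1 :=
    (EReal.tendsto_coe.2 (tendsto_log_one_div_const_mul_div_log hc)).limsup_eq
  calc upperBoxDim (fun ε => N (c * ε))
      = limsup ((fun ε => u (c * ε)) * v) (𝓝[>] 0) := by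
        refine limsup_congr ?_
        filter_upwards [hscale.eventually eventually_log_one_div_pos] with ε hε
        rw [Pi.mul_apply, ← EReal.coe_mul, div_mul_div_cancel₀ hε.ne']
    _ ≤ limsup (fun ε => u (c * ε)) (𝓝[>] 0) * limsup v (𝓝[>] 0) := by
        refine EReal.limsup_mul_le ?_ ?_ (.inr (hv ▸ EReal.coe_ne_top 1)) (.inr (hv ▸ one_ne_zero))
        · exact (hscale.eventually (eventually_log_natCast_div_log_nonneg N)).frequently
        · filter_upwards [eventually_log_one_div_pos,
            hscale.eventually eventually_log_one_div_pos] with ε hε hcε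
          exact EReal.coe_nonneg.2 (div_nonneg hcε.le hε.le)
    _ = limsup (fun ε => u (c * ε)) (𝓝[>] 0) := by rw [hv, mul_one]
    _ ≤ upperBoxDim N := hscale.limsup_comp_le_limsup (u := u)

end UpperBoxDim

section Distances

/-- The `l1` distance between two vectors; twice the total variation distance when they are
probability distributions. -/
def l1Dist {ι : Type*} [Fintype ι] (p q : ι → ℝ) : ℝ := ∑ i, |p i - q i|

lemma l1Dist_triangle_right {ι : Type*} [Fintype ι] (p q m : ι → ℝ) :
    l1Dist p q ≤ l1Dist p m + l1Dist q m := by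
  simp only [l1Dist, ← Finset.sum_add_distrib]
  exact Finset.sum_le_sum fun i _ => dist_triangle_right (p i) (q i) (m i)

/-- The distance between two families indexed by state-action pairs, taken to be the maximum over
all pairs of the distance `d` between their members. With `d = l1Dist` it compares the kernels of
one layer, with `d = dist` the rewards of one layer. -/
noncomputable def maxDist [Fintype S] [Fintype A] [Nonempty S] [Nonempty A] {X : Type*}
    (d : X → X → ℝ) (f g : S → A → X) : ℝ :=
  Finset.univ.sup' Finset.univ_nonempty fun p : S × A => d (f p.1 p.2) (g p.1 p.2)

lemma dist_le_two_mul_of_maxDist_le [Fintype S] [Fintype A] [Nonempty S] [Nonempty A] {X : Type*}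
    {d : X → X → ℝ} (hd : ∀ x y z, d x y ≤ d x z + d y z) {f g c : S → A → X} {δ : ℝ}
    (hf : maxDist d f c ≤ δ) (hg : maxDist d g c ≤ δ) (s : S) (a : A) :
    d (f s a) (g s a) ≤ 2 * δ := by
  have hfc := (Finset.sup'_le_iff _ _).1 hf (s, a) (Finset.mem_univ _)
  have hgc := (Finset.sup'_le_iff _ _).1 hg (s, a) (Finset.mem_univ _)
  linarith [hd (f s a) (g s a) (c s a)]

/-- `N` is the `δ`-covering number of `F` for the distance `d`: the least cardinality of a finite
set of centres, not required to lie in `F`, within distance `δ` of every point of `F`. -/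
def IsCoveringNumber {X : Type*} (d : X → X → ℝ) (F : Set X) (δ : ℝ) (N : ℕ) : Prop :=
  IsLeast {n | ∃ C : Finset X, C.card = n ∧ ∀ x ∈ F, ∃ y ∈ C, d x y ≤ δ} N

lemma isCoveringNumber_image_iff {ι X : Type*} {d : X → X → ℝ} {f : ι → X} {Θ : Set ι} {δ : ℝ}
    {N : ℕ} :
    IsCoveringNumber d (f '' Θ) δ N ↔
      (∃ C : Finset X, C.card = N ∧ ∀ i ∈ Θ, ∃ y ∈ C, d (f i) y ≤ δ) ∧
        ∀ C : Finset X, (∀ i ∈ Θ, ∃ y ∈ C, d (f i) y ≤ δ) → N ≤ C.card := by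
  simp only [IsCoveringNumber, Set.forall_mem_image]
  exact and_congr_right fun _ =>
    ⟨fun h C hC => h ⟨C, rfl, hC⟩, fun h n ⟨C, card_C, hC⟩ => card_C ▸ h C hC⟩

end Distances

section Simulation

lemma abs_sum_mul_le_of_mem_stdSimplex {ι : Type*} [Fintype ι] {p f : ι → ℝ} {B : ℝ}
    (hp : p ∈ stdSimplex ℝ ι) (hf : ∀ i, |f i| ≤ B) : |∑ i, p i * f i| ≤ B :=
  abs_le.2 ((convex_Icc (-B) B).sum_mem (fun i _ => hp.1 i) hp.2 fun i _ => abs_le.1 (hf i))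

lemma abs_sum_mul_sub_sum_mul_le {ι : Type*} [Fintype ι] {p q f g : ι → ℝ} {B D : ℝ}
    (hq : q ∈ stdSimplex ℝ ι) (hf : ∀ i, |f i| ≤ B) (hfg : ∀ i, |f i - g i| ≤ D) :
    |∑ i, p i * f i - ∑ i, q i * g i| ≤ l1Dist p q * B + D := by
  have split : ∑ i, p i * f i - ∑ i, q i * g i =
      ∑ i, (p i - q i) * f i + ∑ i, q i * (f i - g i) := by
    rw [← Finset.sum_sub_distrib, ← Finset.sum_add_distrib]
    exact Finset.sum_congr rfl fun i _ => by ring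
  have change_weights : |∑ i, (p i - q i) * f i| ≤ l1Dist p q * B := by
    rw [l1Dist, Finset.sum_mul]
    refine (Finset.abs_sum_le_sum_abs _ _).trans (Finset.sum_le_sum fun i _ => ?_)
    rw [abs_mul]
    exact mul_le_mul_of_nonneg_left (hf i) (abs_nonneg _)
  rw [split]
  exact (abs_add_le _ _).trans
    (add_le_add change_weights (abs_sum_mul_le_of_mem_stdSimplex hq hfg))

variable [Fintype S] [Fintype A] {H : ℕ} {P P' : ℕ → S → A → S → ℝ} {r r' pol : ℕ → S → A → ℝ}

/-- The action value function: the return of playing `a` in state `s` when `k + 1` steps remain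
and following `pol` afterwards. Layers are counted from the end, as in `val`. -/
noncomputable def actionVal (H : ℕ) (P : ℕ → S → A → S → ℝ) (r pol : ℕ → S → A → ℝ) (k : ℕ)
    (s : S) (a : A) : ℝ :=
  r (H - k) s a + ∑ s', P (H - k) s a s' * val H P r pol k s'

lemma val_succ (k : ℕ) (s : S) :
    val H P r pol (k + 1) s = ∑ a, pol (H - k) s a * actionVal H P r pol k s a :=
  rfl

lemma sub_mem_Icc_one_of_succ_le {k : ℕ} (hk : k + 1 ≤ H) : H - k ∈ Finset.Icc 1 H :=
  Finset.mem_Icc.2 (by lia)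

lemma val_mem_Icc (hP : IsKernel H P) (hr : IsReward H r) (hpol : IsPolicy H pol) {k : ℕ}
    (hk : k ≤ H) (s : S) : val H P r pol k s ∈ Set.Icc (0 : ℝ) k := by
  induction k generalizing s with
  | zero => simp [_root_.val]
  | succ k ih =>
    have hh := sub_mem_Icc_one_of_succ_le hk
    have actionVal_mem (a : A) : actionVal H P r pol k s a ∈ Set.Icc (0 : ℝ) (k + 1 : ℕ) := by
      have hreward := hr _ hh s a
      have hnext : ∑ s', P (H - k) s a s' * val H P r pol k s' ∈ Set.Icc (0 : ℝ) k :=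
        (convex_Icc 0 _).sum_mem (fun s' _ => (hP _ hh s a).1 s') (hP _ hh s a).2
          fun s' _ => ih (by lia) s'
      rw [actionVal, Nat.cast_add_one, add_comm (k : ℝ)]
      exact ⟨add_nonneg hreward.1 hnext.1, add_le_add hreward.2 hnext.2⟩
    exact (convex_Icc 0 _).sum_mem (fun a _ => (hpol _ hh s).1 a) (hpol _ hh s).2
      fun a _ => actionVal_mem a

/-- The simulation lemma. With `k` steps remaining the continuation value is at most `k`, so a
kernel error `η` costs `k * η` at that step; these costs add up to `k.choose 2 * η`. -/
lemma abs_val_sub_val_le (hP : IsKernel H P) (hP' : IsKernel H P') (hr : IsReward H r)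
    (hpol : IsPolicy H pol) {ρ η : ℝ}
    (hPP' : ∀ h ∈ Finset.Icc 1 H, ∀ s a, l1Dist (P h s a) (P' h s a) ≤ η)
    (hrr' : ∀ h ∈ Finset.Icc 1 H, ∀ s a, |r h s a - r' h s a| ≤ ρ) {k : ℕ} (hk : k ≤ H) (s : S) :
    |val H P r pol k s - val H P' r' pol k s| ≤ k * ρ + k.choose 2 * η := by
  induction k generalizing s with
  | zero => simp [_root_.val]
  | succ k ih =>
    have hh := sub_mem_Icc_one_of_succ_le hk
    have abs_val_le (s' : S) : |val H P r pol k s'| ≤ k := by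
      obtain ⟨hnonneg, hle⟩ := val_mem_Icc hP hr hpol (k := k) (by lia) s'
      rwa [abs_of_nonneg hnonneg]
    have actionVal_sub (a : A) : |actionVal H P r pol k s a - actionVal H P' r' pol k s a| ≤
        (k + 1 : ℕ) * ρ + (k + 1).choose 2 * η := by
      calc _ ≤ |r (H - k) s a - r' (H - k) s a| +
            |∑ s', P (H - k) s a s' * val H P r pol k s' -
              ∑ s', P' (H - k) s a s' * val H P' r' pol k s'| := by
            rw [actionVal, actionVal, add_sub_add_comm]
            exact abs_add_le _ _
        _ ≤ ρ + (l1Dist (P (H - k) s a) (P' (H - k) s a) * k +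
              (k * ρ + k.choose 2 * η)) :=
            add_le_add (hrr' _ hh s a)
              (abs_sum_mul_sub_sum_mul_le (hP' _ hh s a) abs_val_le fun s' => ih (by lia) s')
        _ ≤ ρ + (η * k + (k * ρ + k.choose 2 * η)) := by
            gcongr
            exact hPP' _ hh s a
        _ = (k + 1 : ℕ) * ρ + (k + 1).choose 2 * η := by
            rw [Nat.choose_succ_succ' k 1, Nat.choose_one_right]
            push_cast
            ring
    rw [val_succ, val_succ, ← Finset.sum_sub_distrib]
    simp only [← mul_sub]
    exact abs_sum_mul_le_of_mem_stdSimplex (hpol _ hh s) actionVal_sub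

end Simulation

section Partition

variable [Fintype S] [Fintype A] {H : ℕ} {s₁ : S} {Θ : Set (Env S A)}
  {π : Env S A → (ℕ → S → A → ℝ)} {ε : ℝ}

lemma exists_isLayeredValuePartition_of_labels {α β : Type*}
    (φ : ℕ → (S → A → S → ℝ) → α) (ψ : ℕ → (S → A → ℝ) → β)
    (C : ℕ → Finset α) (D : ℕ → Finset β)
    (hC : ∀ E ∈ Θ, ∀ h ∈ Finset.Icc 1 H, φ h (E.1 h) ∈ C h)
    (hD : ∀ E ∈ Θ, ∀ h ∈ Finset.Icc 1 H, ψ h (E.2 h) ∈ D h)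
    (hval : ∀ E ∈ Θ, ∀ E' ∈ Θ,
      (∀ h ∈ Finset.Icc 1 H, φ h (E.1 h) = φ h (E'.1 h) ∧ ψ h (E.2 h) = ψ h (E'.2 h)) →
      val H E.1 E.2 (π E) H s₁ - val H E'.1 E'.2 (π E) H s₁ ≤ ε) :
    ∃ T : Fin (∏ h ∈ Finset.Icc 1 H, (C h).card * (D h).card) → Set (Env S A),
      IsLayeredValuePartition H s₁ Θ π ε _ T := by
  let labels := (Finset.Icc 1 H).pi fun h => C h ×ˢ D h
  let label (E : Env S A) : ∀ h ∈ Finset.Icc 1 H, α × β := fun h _ => (φ h (E.1 h), ψ h (E.2 h))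
  have label_mem (E : Env S A) (hE : E ∈ Θ) : label E ∈ labels :=
    Finset.mem_pi.2 fun h hh => Finset.mk_mem_product (hC E hE h hh) (hD E hE h hh)
  have card_labels : labels.card = ∏ h ∈ Finset.Icc 1 H, (C h).card * (D h).card := by
    simp only [labels, Finset.card_pi, Finset.card_product]
  let e := labels.equivFinOfCardEq card_labels
  refine ⟨fun k => {E ∈ Θ | label E = e.symm k}, fun E hE => ?_, fun k => ?_, ?_⟩
  · refine ⟨e ⟨label E, label_mem E hE⟩, ⟨hE, by simp⟩, fun k hk => ?_⟩
    rw [← e.symm_apply_eq]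
    exact Subtype.ext hk.2.symm
  · refine ⟨fun h => {Q | ∀ hh, φ h Q = ((e.symm k).1 h hh).1},
      fun h => {q | ∀ hh, ψ h q = ((e.symm k).1 h hh).2}, ?_⟩
    ext E
    refine and_congr_right fun _ => ⟨fun hE h _ => ?_, fun hE => ?_⟩
    · simp [← hE, label]
    · funext h hh
      exact Prod.ext ((hE h hh).1 hh) ((hE h hh).2 hh)
  · rintro k E ⟨hE, hEk⟩ E' ⟨hE', hEk'⟩
    refine hval E hE E' hE' fun h hh => ?_
    exact Prod.mk.inj (congrFun (congrFun (hEk.trans hEk'.symm) h) hh)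

variable [Nonempty S] [Nonempty A]

lemma exists_isLayeredValuePartition_of_covers (hΘ : ∀ E ∈ Θ, IsKernel H E.1 ∧ IsReward H E.2)
    (hπ : ∀ E ∈ Θ, IsPolicy H (π E)) {δ : ℝ} (hδ : H * (H + 1) * δ ≤ ε)
    (C : ℕ → Finset (S → A → S → ℝ)) (D : ℕ → Finset (S → A → ℝ))
    (hC : ∀ h ∈ Finset.Icc 1 H, ∀ P ∈ (fun E : Env S A => E.1 h) '' Θ,
      ∃ Q ∈ C h, maxDist l1Dist P Q ≤ δ)
    (hD : ∀ h ∈ Finset.Icc 1 H, ∀ r ∈ (fun E : Env S A => E.2 h) '' Θ,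
      ∃ q ∈ D h, maxDist dist r q ≤ δ) :
    ∃ T : Fin (∏ h ∈ Finset.Icc 1 H, (C h).card * (D h).card) → Set (Env S A),
      IsLayeredValuePartition H s₁ Θ π ε _ T := by
  choose! φ φ_mem φ_dist using hC
  choose! ψ ψ_mem ψ_dist using hD
  refine exists_isLayeredValuePartition_of_labels φ ψ C D
    (fun E hE h hh => φ_mem h hh _ ⟨E, hE, rfl⟩) (fun E hE h hh => ψ_mem h hh _ ⟨E, hE, rfl⟩)
    fun E hE E' hE' same_label => ?_
  have kernel_close : ∀ h ∈ Finset.Icc 1 H, ∀ s a, l1Dist (E.1 h s a) (E'.1 h s a) ≤ 2 * δ :=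
    fun h hh => dist_le_two_mul_of_maxDist_le l1Dist_triangle_right (φ_dist h hh _ ⟨E, hE, rfl⟩)
      ((same_label h hh).1 ▸ φ_dist h hh _ ⟨E', hE', rfl⟩)
  have reward_close : ∀ h ∈ Finset.Icc 1 H, ∀ s a, |E.2 h s a - E'.2 h s a| ≤ 2 * δ :=
    fun h hh => dist_le_two_mul_of_maxDist_le dist_triangle_right (ψ_dist h hh _ ⟨E, hE, rfl⟩)
      ((same_label h hh).2 ▸ ψ_dist h hh _ ⟨E', hE', rfl⟩)
  calc val H E.1 E.2 (π E) H s₁ - val H E'.1 E'.2 (π E) H s₁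
      ≤ H * (2 * δ) + H.choose 2 * (2 * δ) :=
        (le_abs_self _).trans (abs_val_sub_val_le (hΘ E hE).1 (hΘ E' hE').1 (hΘ E hE).2 (hπ E hE)
          kernel_close reward_close le_rfl s₁)
    _ = H * (H + 1) * δ := by
        rw [Nat.cast_choose_two]
        ring
    _ ≤ ε := hδ

lemma exists_isLayeredValuePartition_of_coveringNumbers
    (hΘ : ∀ E ∈ Θ, IsKernel H E.1 ∧ IsReward H E.2) (hπ : ∀ E ∈ Θ, IsPolicy H (π E)) {δ : ℝ}
    (hδ : H * (H + 1) * δ ≤ ε) (M N : ℕ → ℕ)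
    (hM : ∀ h ∈ Finset.Icc 1 H,
      IsCoveringNumber (maxDist l1Dist) ((fun E : Env S A => E.1 h) '' Θ) δ (M h))
    (hN : ∀ h ∈ Finset.Icc 1 H,
      IsCoveringNumber (maxDist dist) ((fun E : Env S A => E.2 h) '' Θ) δ (N h)) :
    ∃ T : Fin (∏ h ∈ Finset.Icc 1 H, M h * N h) → Set (Env S A),
      IsLayeredValuePartition H s₁ Θ π ε _ T := by
  choose! C card_C hC using fun h hh => (hM h hh).1
  choose! D card_D hD using fun h hh => (hN h hh).1
  have card_eq : ∏ h ∈ Finset.Icc 1 H, M h * N h =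
      ∏ h ∈ Finset.Icc 1 H, (C h).card * (D h).card :=
    Finset.prod_congr rfl fun h hh => by rw [card_C h hh, card_D h hh]
  rw [card_eq]
  exact exists_isLayeredValuePartition_of_covers hΘ hπ hδ C D hC hD

end Partition

theorem surrogate_dim_le_l1_dim_general [Fintype S] [Fintype A] [Nonempty S] [Nonempty A]
    (H : ℕ) (s₁ : S) (Θ : Set (Env S A)) (hΘ : ∀ E ∈ Θ, IsKernel H E.1 ∧ IsReward H E.2)
    (π : Env S A → (ℕ → S → A → ℝ)) (hπ : ∀ E ∈ Θ, IsPolicy H (π E)) (LP LR : ℕ → ℝ → ℕ)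
    (hLP : ∀ h ∈ Finset.Icc 1 H, ∀ δ : ℝ, 0 < δ →
      IsCoveringNumber (maxDist l1Dist) ((fun E : Env S A => E.1 h) '' Θ) δ (LP h δ))
    (hLR : ∀ h ∈ Finset.Icc 1 H, ∀ δ : ℝ, 0 < δ →
      IsCoveringNumber (maxDist dist) ((fun E : Env S A => E.2 h) '' Θ) δ (LR h δ))
    (Kval : ℝ → ℕ)
    (hKval : ∀ ε : ℝ, 0 < ε → IsLeast
      {K | ∃ T : Fin K → Set (Env S A), IsLayeredValuePartition H s₁ Θ π ε K T} (Kval ε)) :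
    upperBoxDim Kval ≤ ∑ h ∈ Finset.Icc 1 H, (upperBoxDim (LP h) + upperBoxDim (LR h)) := by
  obtain ⟨c, hc, hcH⟩ : ∃ c : ℝ, 0 < c ∧ H * (H + 1) * c ≤ 1 :=
    ⟨((H + 1) * (H + 1))⁻¹, by positivity, by
      rw [← div_eq_mul_inv]
      exact div_le_one_of_le₀ (by gcongr; linarith) (by positivity)⟩
  have hK (ε : ℝ) (hε : 0 < ε) :
      Kval ε ≤ ∏ h ∈ Finset.Icc 1 H, LP h (c * ε) * LR h (c * ε) := by
    refine (hKval ε hε).2 (exists_isLayeredValuePartition_of_coveringNumbers hΘ hπ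
      (δ := c * ε) ?_ _ _ (fun h hh => hLP h hh _ (mul_pos hc hε))
      fun h hh => hLR h hh _ (mul_pos hc hε))
    rw [← mul_assoc]
    exact mul_le_of_le_one_left hε.le hcH
  calc upperBoxDim Kval
      ≤ upperBoxDim fun ε => ∏ h ∈ Finset.Icc 1 H, LP h (c * ε) * LR h (c * ε) :=
        upperBoxDim_mono (eventually_mem_nhdsWithin.mono hK)
    _ ≤ upperBoxDim fun δ => ∏ h ∈ Finset.Icc 1 H, LP h δ * LR h δ :=
        upperBoxDim_comp_const_mul_le (fun δ => ∏ h ∈ Finset.Icc 1 H, LP h δ * LR h δ) hc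
    _ ≤ ∑ h ∈ Finset.Icc 1 H, upperBoxDim fun δ => LP h δ * LR h δ := upperBoxDim_prod_le _ _
    _ ≤ ∑ h ∈ Finset.Icc 1 H, (upperBoxDim (LP h) + upperBoxDim (LR h)) :=
        Finset.sum_le_sum fun h _ => upperBoxDim_mul_le _ _

/-- the surrogate dimension is bounded by the `l1`-dimension. -/
theorem surrogate_dim_le_l1_dim
    [Fintype S] [Fintype A] [Nonempty S] [Nonempty A]
    (H : ℕ) (hH : 1 ≤ H) (s₁ : S)
    (Θ : Set (Env S A))
    (hΘ : ∀ E ∈ Θ, IsKernel H E.1 ∧ IsReward H E.2)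
    (πstar : Env S A → (ℕ → S → A → ℝ))
    (hπstar : ∀ E ∈ Θ, IsPolicy H (πstar E))
    (hopt : ∀ E ∈ Θ, ∀ pol, IsPolicy H pol →
      val H E.1 E.2 pol H s₁ ≤ val H E.1 E.2 (πstar E) H s₁)
    (LP LR : ℕ → ℝ → ℕ)
    -- `LP h δ` is the minimal cardinality of a `δ`-cover of `{P_h^E : E ∈ Θ}`
    (hLP : ∀ h ∈ Finset.Icc 1 H, ∀ δ : ℝ, 0 < δ →
      (∃ C : Finset (S → A → S → ℝ), C.card = LP h δ ∧
        ∀ E ∈ Θ, ∃ Q ∈ C,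
          (Finset.univ.sup' Finset.univ_nonempty fun p : S × A =>
            ∑ s', |E.1 h p.1 p.2 s' - Q p.1 p.2 s'|) ≤ δ) ∧
      (∀ C : Finset (S → A → S → ℝ),
        (∀ E ∈ Θ, ∃ Q ∈ C,
          (Finset.univ.sup' Finset.univ_nonempty fun p : S × A =>
            ∑ s', |E.1 h p.1 p.2 s' - Q p.1 p.2 s'|) ≤ δ) → LP h δ ≤ C.card))
    -- `LR h δ` is the minimal cardinality of a `δ`-cover of `{r_h^E : E ∈ Θ}`
    (hLR : ∀ h ∈ Finset.Icc 1 H, ∀ δ : ℝ, 0 < δ →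
      (∃ C : Finset (S → A → ℝ), C.card = LR h δ ∧
        ∀ E ∈ Θ, ∃ q ∈ C,
          (Finset.univ.sup' Finset.univ_nonempty fun p : S × A =>
            |E.2 h p.1 p.2 - q p.1 p.2|) ≤ δ) ∧
      (∀ C : Finset (S → A → ℝ),
        (∀ E ∈ Θ, ∃ q ∈ C,
          (Finset.univ.sup' Finset.univ_nonempty fun p : S × A =>
            |E.2 h p.1 p.2 - q p.1 p.2|) ≤ δ) → LR h δ ≤ C.card))
    (Ksurr : ℝ → ℕ)
    -- `Ksurr ε` is the minimal number of classes of a layered ε-value partition of `Θ`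
    (hKsurr : ∀ ε : ℝ, 0 < ε →
      (∃ T : Fin (Ksurr ε) → Set (Env S A),
        IsLayeredValuePartition H s₁ Θ πstar ε (Ksurr ε) T) ∧
      (∀ (K : ℕ) (T : Fin K → Set (Env S A)),
        IsLayeredValuePartition H s₁ Θ πstar ε K T → Ksurr ε ≤ K)) :
    limsup (fun ε : ℝ =>
        ((Real.log (Ksurr ε) / Real.log (1 / ε) : ℝ) : EReal)) (nhdsWithin 0 (Set.Ioi 0)) ≤
      ∑ h ∈ Finset.Icc 1 H,
        (limsup (fun δ : ℝ =>
            ((Real.log (LP h δ) / Real.log (1 / δ) : ℝ) : EReal)) (nhdsWithin 0 (Set.Ioi 0)) +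
          limsup (fun δ : ℝ =>
            ((Real.log (LR h δ) / Real.log (1 / δ) : ℝ) : EReal)) (nhdsWithin 0 (Set.Ioi 0))) := by
  exact surrogate_dim_le_l1_dim_general H s₁ Θ hΘ πstar hπstar LP LR
    (fun h hh δ hδ => isCoveringNumber_image_iff.2 (hLP h hh δ hδ))
    (fun h hh δ hδ => isCoveringNumber_image_iff.2 (hLR h hh δ hδ)) Ksurr
    fun ε hε => ⟨(hKsurr ε hε).1, fun K ⟨T, hT⟩ => (hKsurr ε hε).2 K T hT⟩
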